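/- Let H be a Hopf algebra over a field k whose antipode S is bijective. On the vector space B := Hom_k(H, k) ⊗ H define a multiplication by (φ ⊗ h)·(φ' ⊗ h') = ψ ⊗ h₍₂₎h', where ψ ∈ Hom_k(H, k) is the linear functional ψ(x) = φ(x₍₁₎)·φ'(S^{-1}(h₍₃₎) x₍₂₎ S²(h₍₁₎)) (Sweedler notation, summation understood). Then this multiplication is associative and has unit ε ⊗ 1_H, so that B is an associative unital k-algebra. -/

import Mathlib

open TensorProduct

section Setup

variable (k : Type*) [Field k] (H : Type*) [Ring H] [HopfAlgebra k H]

/-- The iterated comultiplication `h ↦ h₍₁₎ ⊗ (h₍₂₎ ⊗ h₍₃₎)`. -/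
noncomputable def Delta2 : H →ₗ[k] H ⊗[k] (H ⊗[k] H) :=
  (LinearMap.lTensor H (Coalgebra.comul (R := k))) ∘ₗ (Coalgebra.comul (R := k))

/-- The antipode of `H`. -/
noncomputable def antS : H →ₗ[k] H := HopfAlgebra.antipode (R := k)

/-- The (two-sided) inverse of the antipode, which exists when the antipode is
bijective. -/
noncomputable def antSinv : H → H := Function.invFun (antS k H)

end Setup

section AntipodeComul

open LinearMap WithConv HopfAlgebra

variable {k : Type*} [Field k] {H : Type*} [Ring H] [HopfAlgebra k H]

theorem Coalgebra.exists_comul_eq_sum_fin (x : H) : ∃ (m : ℕ) (P Q : Fin m → H),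
    Coalgebra.comul (R := k) x = ∑ j, P j ⊗ₜ[k] Q j := by
  let r := Coalgebra.Repr.arbitrary k x
  let e := r.index.equivFin
  refine ⟨_, fun j ↦ r.left (e.symm j), fun j ↦ r.right (e.symm j), ?_⟩
  rw [← r.eq, ← Finset.sum_coe_sort, ← e.symm.sum_comp]

/-- The antipode is a coalgebra antihomomorphism. -/
theorem HopfAlgebra.comul_antipode_eq (h : H) :
    Coalgebra.comul (R := k) (antipode k h) =
      TensorProduct.map (antipode k) (antipode k)
        (TensorProduct.comm k H H (Coalgebra.comul (R := k) h)) := by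
  let iL : H →ₐ[k] H ⊗[k] H := Algebra.TensorProduct.includeLeft
  let iR : H →ₐ[k] H ⊗[k] H := Algebra.TensorProduct.includeRight
  have inv (f : H →ₐ[k] H ⊗[k] H) :
      toConv (f.toLinearMap ∘ₗ antipode k) * toConv f.toLinearMap = 1 := by
    have := algHom_comp_convMul_distrib f (toConv (antipode k (A := H))) (toConv LinearMap.id)
    rw [antipode_mul_id] at this
    apply WithConv.ext
    rw [ofConv_toConv, LinearMap.comp_id] at this
    rw [← this]
    ext x
    simp
  have hδ : toConv (Coalgebra.comul (R := k) (A := H)) =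
      toConv iL.toLinearMap * toConv iR.toLinearMap := by
    ext x
    obtain ⟨m, P, Q, e⟩ := Coalgebra.exists_comul_eq_sum_fin (k := k) x
    simp [e, iL, iR]
  have hG : toConv (TensorProduct.map (antipode k) (antipode k) ∘ₗ
        (TensorProduct.comm k H H).toLinearMap ∘ₗ Coalgebra.comul (R := k) (A := H)) =
      toConv (iR.toLinearMap ∘ₗ antipode k) * toConv (iL.toLinearMap ∘ₗ antipode k) := by
    ext x
    obtain ⟨m, P, Q, e⟩ := Coalgebra.exists_comul_eq_sum_fin (k := k) x
    simp [e, iL, iR]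
  have key := left_inv_eq_right_inv (a := toConv (Coalgebra.comul (R := k) (A := H)))
    (b := toConv (TensorProduct.map (antipode k) (antipode k) ∘ₗ
        (TensorProduct.comm k H H).toLinearMap ∘ₗ Coalgebra.comul (R := k) (A := H)))
    (by rw [hG, hδ, mul_assoc, ← mul_assoc (toConv (iL.toLinearMap ∘ₗ _)), inv, one_mul, inv])
    comul_right_inv
  exact congr($key h).symm

end AntipodeComul

section Coassoc
variable {k : Type*} [Field k] {H : Type*} [Ring H] [HopfAlgebra k H]

theorem lTensor_rTensor_Delta2_comp_Delta2 :
    LinearMap.lTensor H (LinearMap.rTensor H (Delta2 k H)) ∘ₗ Delta2 k H =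
      LinearMap.lTensor H ((TensorProduct.assoc k H (H ⊗[k] H) H).symm.toLinearMap ∘ₗ
        LinearMap.lTensor H (TensorProduct.assoc k H H H).symm.toLinearMap) ∘ₗ
      (TensorProduct.assoc k H H (H ⊗[k] (H ⊗[k] H))).toLinearMap ∘ₗ
      TensorProduct.map (Coalgebra.comul (R := k)) (LinearMap.lTensor H (Coalgebra.comul (R := k)))
      ∘ₗ Delta2 k H := by
  simp only [Delta2, coassoc_simps]

end Coassoc

section DualAction

variable (k : Type*) [Field k] (H : Type*) [Ring H] [HopfAlgebra k H]

/-- The convolution product on the linear dual of `H`. -/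
noncomputable def dualConv : Module.Dual k H →ₗ[k] Module.Dual k H →ₗ[k] Module.Dual k H :=
  LinearMap.mk₂ k
    (fun φ φ' ↦ LinearMap.mul' k k ∘ₗ TensorProduct.map φ φ' ∘ₗ Coalgebra.comul (R := k))
    (fun _ _ _ ↦ by simp only [TensorProduct.map_add_left, LinearMap.add_comp, LinearMap.comp_add])
    (fun _ _ _ ↦ by
      simp only [TensorProduct.map_smul_left, LinearMap.smul_comp, LinearMap.comp_smul])
    (fun _ _ _ ↦ by simp only [TensorProduct.map_add_right, LinearMap.add_comp, LinearMap.comp_add])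
    (fun _ _ _ ↦ by
      simp only [TensorProduct.map_smul_right, LinearMap.smul_comp, LinearMap.comp_smul])

/-- The action `a ↦ φ(- S²(a))` of `H` on its linear dual. -/
noncomputable def dualSqAction : H →ₗ[k] Module.End k (Module.Dual k H) :=
  LinearMap.mk₂ k (fun a φ ↦ φ ∘ₗ LinearMap.mulRight k (antS k H (antS k H a)))
    (fun _ _ _ ↦ by ext; simp [mul_add])
    (fun _ _ _ ↦ by ext; simp)
    (fun _ _ _ ↦ by ext; simp)
    (fun _ _ _ ↦ by ext; simp)

variable {k H} in
/-- The action `c ↦ φ(S⁻¹(c) -)` of `H` on its linear dual. -/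
noncomputable def dualInvAction (hS : Function.Bijective (antS k H)) :
    H →ₗ[k] Module.End k (Module.Dual k H) :=
  LinearMap.mk₂ k
    (fun c φ ↦ φ ∘ₗ LinearMap.mulLeft k ((LinearEquiv.ofBijective (antS k H) hS).symm c))
    (fun _ _ _ ↦ by ext; simp [add_mul])
    (fun _ _ _ ↦ by ext; simp)
    (fun _ _ _ ↦ by ext; simp)
    (fun _ _ _ ↦ by ext; simp)

/-- Left multiplication by a functional on `Hom_k(H, k) ⊗ H`. -/
noncomputable def dualMulLeft : Module.Dual k H →ₗ[k] Module.End k (Module.Dual k H ⊗[k] H) :=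
  LinearMap.rTensorHom H ∘ₗ dualConv k H

variable {k H} (hS : Function.Bijective (antS k H))

theorem dualConv_apply_of_comul_eq (φ φ' : Module.Dual k H) {x : H} {m : ℕ} {P Q : Fin m → H}
    (e : Coalgebra.comul (R := k) x = ∑ j, P j ⊗ₜ[k] Q j) :
    dualConv k H φ φ' x = ∑ j, φ (P j) * φ' (Q j) := by
  simp [dualConv, e]

theorem dualConv_assoc (φ φ' φ'' : Module.Dual k H) :
    dualConv k H (dualConv k H φ φ') φ'' = dualConv k H φ (dualConv k H φ' φ'') :=
  congrArg WithConv.ofConv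
    (mul_assoc (WithConv.toConv φ) (WithConv.toConv φ') (WithConv.toConv φ''))

theorem counit_dualConv (φ : Module.Dual k H) :
    dualConv k H (Coalgebra.counit (R := k)) φ = φ :=
  congrArg WithConv.ofConv (one_mul (WithConv.toConv φ))

theorem dualConv_counit (φ : Module.Dual k H) :
    dualConv k H φ (Coalgebra.counit (R := k)) = φ :=
  congrArg WithConv.ofConv (mul_one (WithConv.toConv φ))

@[simp]
theorem dualSqAction_apply (a : H) (φ : Module.Dual k H) (x : H) :
    dualSqAction k H a φ x = φ (x * antS k H (antS k H a)) := rfl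

@[simp]
theorem dualInvAction_apply (c : H) (φ : Module.Dual k H) (x : H) :
    dualInvAction hS c φ x = φ ((LinearEquiv.ofBijective (antS k H) hS).symm c * x) := rfl

@[simp]
theorem dualMulLeft_tmul (φ φ' : Module.Dual k H) (h : H) :
    dualMulLeft k H φ (φ' ⊗ₜ h) = dualConv k H φ φ' ⊗ₜ[k] h := rfl

theorem antS_mul (a b : H) : antS k H (a * b) = antS k H b * antS k H a :=
  HopfAlgebra.antipode_mul_antidistrib a b

theorem antS_one : antS k H (1 : H) = 1 := HopfAlgebra.antipode_one

theorem counit_antS (a : H) :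
    Coalgebra.counit (R := k) (antS k H a) = Coalgebra.counit (R := k) a :=
  HopfAlgebra.counit_antipode a

theorem antSinv_eq (c : H) :
    antSinv k H c = (LinearEquiv.ofBijective (antS k H) hS).symm c := by
  rw [LinearEquiv.eq_symm_apply]
  exact Function.invFun_eq (hS.2 c)

theorem antS_symm_mul (a b : H) :
    (LinearEquiv.ofBijective (antS k H) hS).symm (a * b) =
      (LinearEquiv.ofBijective (antS k H) hS).symm b *
        (LinearEquiv.ofBijective (antS k H) hS).symm a := by
  rw [LinearEquiv.symm_apply_eq, LinearEquiv.ofBijective_apply]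
  refine .trans ?_ (HopfAlgebra.antipode_mul_antidistrib _ _).symm
  congr 1
  · exact ((LinearEquiv.ofBijective (antS k H) hS).apply_symm_apply a).symm
  · exact ((LinearEquiv.ofBijective (antS k H) hS).apply_symm_apply b).symm

theorem comul_antS_antS {h : H} {m : ℕ} {P Q : Fin m → H}
    (e : Coalgebra.comul (R := k) h = ∑ j, P j ⊗ₜ[k] Q j) :
    Coalgebra.comul (R := k) (antS k H (antS k H h)) =
      ∑ j, antS k H (antS k H (P j)) ⊗ₜ[k] antS k H (antS k H (Q j)) := by
  simp [antS, HopfAlgebra.comul_antipode_eq, e]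

theorem comul_antS_symm {h : H} {m : ℕ} {P Q : Fin m → H}
    (e : Coalgebra.comul (R := k) h = ∑ j, P j ⊗ₜ[k] Q j) :
    Coalgebra.comul (R := k) ((LinearEquiv.ofBijective (antS k H) hS).symm h) =
      ∑ j, (LinearEquiv.ofBijective (antS k H) hS).symm (Q j) ⊗ₜ[k]
        (LinearEquiv.ofBijective (antS k H) hS).symm (P j) := by
  set E := LinearEquiv.ofBijective (antS k H) hS
  have hE (x : H) : antS k H (E.symm x) = x := E.apply_symm_apply x
  apply (TensorProduct.comm k H H).injective
  apply (TensorProduct.congr E E).injective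
  refine (HopfAlgebra.comul_antipode_eq (k := k) (E.symm h)).symm.trans ?_
  change Coalgebra.comul (R := k) (antS k H (E.symm h)) = _
  simp [hE, e]

theorem dualSqAction_dualConv {h : H} {m : ℕ} {P Q : Fin m → H}
    (e : Coalgebra.comul (R := k) h = ∑ j, P j ⊗ₜ[k] Q j) (φ φ' : Module.Dual k H) :
    dualSqAction k H h (dualConv k H φ φ') =
      ∑ j, dualConv k H (dualSqAction k H (P j) φ) (dualSqAction k H (Q j) φ') := by
  ext x
  obtain ⟨n, A, B, ex⟩ := Coalgebra.exists_comul_eq_sum_fin (k := k) x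
  simp [dualConv, Bialgebra.comul_mul, ex, comul_antS_antS e, Finset.sum_mul_sum]
  exact Finset.sum_comm

theorem dualInvAction_dualConv {h : H} {m : ℕ} {P Q : Fin m → H}
    (e : Coalgebra.comul (R := k) h = ∑ j, P j ⊗ₜ[k] Q j) (φ φ' : Module.Dual k H) :
    dualInvAction hS h (dualConv k H φ φ') =
      ∑ j, dualConv k H (dualInvAction hS (Q j) φ) (dualInvAction hS (P j) φ') := by
  ext x
  obtain ⟨n, A, B, ex⟩ := Coalgebra.exists_comul_eq_sum_fin (k := k) x
  simp [dualConv, Bialgebra.comul_mul, ex, comul_antS_symm hS e, Finset.sum_mul_sum]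

/-- The operator `φ ⊗ h' ↦ φ(S⁻¹(c) - S²(a)) ⊗ b h'` attached to `a ⊗ (b ⊗ c)`. -/
noncomputable def twistedLeft :
    H ⊗[k] (H ⊗[k] H) →ₗ[k] Module.End k (Module.Dual k H ⊗[k] H) :=
  TensorProduct.lift (
    (TensorProduct.lift.equiv (.id k) H H _).toLinearMap ∘ₗ
    (LinearMap.mk₂ k (fun a b ↦
      (TensorProduct.mapBilinear (.id k) (Module.Dual k H) H (Module.Dual k H) H).flip
          (LinearMap.mul k H b) ∘ₗ
        LinearMap.mulLeft k (dualSqAction k H a) ∘ₗ dualInvAction hS)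
      (fun _ _ _ ↦ by ext; simp [TensorProduct.add_tmul])
      (fun _ _ _ ↦ by ext; simp [TensorProduct.smul_tmul'])
      (fun _ _ _ ↦ by ext; simp)
      (fun _ _ _ ↦ by ext; simp)))

@[simp]
theorem twistedLeft_tmul (a b c : H) (φ : Module.Dual k H) (h : H) :
    twistedLeft hS (a ⊗ₜ (b ⊗ₜ c)) (φ ⊗ₜ h) =
      dualSqAction k H a (dualInvAction hS c φ) ⊗ₜ[k] (b * h) := rfl

theorem twistedLeft_mul (s t : H ⊗[k] (H ⊗[k] H)) :
    twistedLeft hS (s * t) = twistedLeft hS s * twistedLeft hS t := by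
  have : (LinearMap.mul k (H ⊗[k] (H ⊗[k] H))).compr₂ (twistedLeft hS) =
      (LinearMap.mul k (Module.End k (Module.Dual k H ⊗[k] H))).compl₁₂
        (twistedLeft hS) (twistedLeft hS) := by
    refine TensorProduct.ext_threefold' fun a b c ↦ TensorProduct.ext_threefold' fun a' b' c' ↦
      TensorProduct.ext' fun φ h ↦ ?_
    simp only [LinearMap.compr₂_apply, LinearMap.mul_apply_apply,
      LinearMap.compl₁₂_apply, Module.End.mul_apply, Algebra.TensorProduct.tmul_mul_tmul,
      twistedLeft_tmul, mul_assoc]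
    congr 1
    ext x
    simp [antS_symm_mul, antS_mul, mul_assoc]
  exact congr($this s t)

/-- The operator on `Hom_k(H, k) ⊗ H` of left multiplication by `ε ⊗ h`. -/
noncomputable def coactLeft : H →ₗ[k] Module.End k (Module.Dual k H ⊗[k] H) :=
  twistedLeft hS ∘ₗ Delta2 k H

theorem Delta2_mul (a b : H) : Delta2 k H (a * b) = Delta2 k H a * Delta2 k H b := by
  have (x : H ⊗[k] H) : LinearMap.lTensor H (Coalgebra.comul (R := k)) x =
      Algebra.TensorProduct.map (AlgHom.id k H) (Bialgebra.comulAlgHom k H) x := rfl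
  simp [Delta2, this]

theorem Delta2_one : Delta2 k H 1 = 1 := by
  simp [Delta2, Algebra.TensorProduct.one_def]

theorem coactLeft_mul (a b : H) : coactLeft hS (a * b) = coactLeft hS a * coactLeft hS b := by
  simp [coactLeft, Delta2_mul, twistedLeft_mul]

theorem coactLeft_one : coactLeft hS (1 : H) = 1 := by
  have h1 : (LinearEquiv.ofBijective (antS k H) hS).symm 1 = 1 := by
    simp [LinearEquiv.symm_apply_eq, antS_one]
  refine TensorProduct.ext' fun φ h ↦ ?_
  simp only [coactLeft, LinearMap.comp_apply, Delta2_one, Algebra.TensorProduct.one_def,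
    twistedLeft_tmul, one_mul, Module.End.one_apply]
  congr 1
  ext x
  simp [h1, antS_one]

theorem counit_antS_symm (c : H) :
    Coalgebra.counit (R := k) ((LinearEquiv.ofBijective (antS k H) hS).symm c) =
      Coalgebra.counit (R := k) c := by
  rw [← HopfAlgebra.counit_antipode]
  exact congrArg _ ((LinearEquiv.ofBijective (antS k H) hS).apply_symm_apply c)

theorem twistedLeft_comul_counit_tmul_one (a b : H) :
    twistedLeft hS (a ⊗ₜ Coalgebra.comul (R := k) b)
        ((Coalgebra.counit (R := k) : Module.Dual k H) ⊗ₜ 1) =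
      (Coalgebra.counit (R := k) : Module.Dual k H) ⊗ₜ[k] (Coalgebra.counit (R := k) a • b) := by
  have h0 (a c : H) : dualSqAction k H a (dualInvAction hS c (Coalgebra.counit (R := k))) =
      Coalgebra.counit (R := k) a • Coalgebra.counit (R := k) c •
        (Coalgebra.counit (R := k) : Module.Dual k H) := by
    ext x
    simp [counit_antS_symm, counit_antS]
    ring
  have h1 := Coalgebra.lTensor_counit_comul (R := k) b
  obtain ⟨m, P, Q, e⟩ := Coalgebra.exists_comul_eq_sum_fin (k := k) b
  rw [e, map_sum] at h1
  replace h1 := congrArg (TensorProduct.rid k H) h1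
  simp only [map_sum, LinearMap.lTensor_tmul, TensorProduct.rid_tmul, one_smul] at h1
  rw [e, ← h1]
  simp [TensorProduct.tmul_sum, Finset.smul_sum, h0, TensorProduct.smul_tmul']

theorem coactLeft_counit_tmul_one (h : H) :
    coactLeft hS h ((Coalgebra.counit (R := k) : Module.Dual k H) ⊗ₜ 1) =
      (Coalgebra.counit (R := k) : Module.Dual k H) ⊗ₜ[k] h := by
  have h1 := Coalgebra.rTensor_counit_comul (R := k) h
  obtain ⟨m, P, Q, e⟩ := Coalgebra.exists_comul_eq_sum_fin (k := k) h
  rw [e, map_sum] at h1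
  replace h1 := congrArg (TensorProduct.lid k H) h1
  simp only [map_sum, LinearMap.rTensor_tmul, TensorProduct.lid_tmul, one_smul] at h1
  simp only [coactLeft, Delta2, LinearMap.comp_apply, e, map_sum, LinearMap.lTensor_tmul,
    LinearMap.sum_apply, twistedLeft_comul_counit_tmul_one]
  rw [← TensorProduct.tmul_sum, h1]

/-- The linear map
`a ⊗ ((s ⊗ t ⊗ u) ⊗ c) ↦ (φ(S⁻¹(c) - S²(a)) ⊗ 1) ∘ twistedLeft (s ⊗ t ⊗ u)`. -/
noncomputable def twistedMulLeft (φ : Module.Dual k H) :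
    H ⊗[k] ((H ⊗[k] (H ⊗[k] H)) ⊗[k] H) →ₗ[k] Module.End k (Module.Dual k H ⊗[k] H) :=
  LinearMap.mul' k _ ∘ₗ (TensorProduct.comm k _ _).toLinearMap ∘ₗ
    TensorProduct.map (twistedLeft hS)
      (TensorProduct.lift (LinearMap.mk₂ k
        (fun a c ↦ dualMulLeft k H (dualSqAction k H a (dualInvAction hS c φ)))
        (by simp) (by simp) (by simp) (by simp))) ∘ₗ
    (TensorProduct.leftComm k _ _ _).toLinearMap

@[simp]
theorem twistedMulLeft_tmul (φ : Module.Dual k H) (a c : H) (t : H ⊗[k] (H ⊗[k] H)) :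
    twistedMulLeft hS φ (a ⊗ₜ (t ⊗ₜ c)) =
      dualMulLeft k H (dualSqAction k H a (dualInvAction hS c φ)) * twistedLeft hS t := rfl

theorem twistedLeft_mul_dualMulLeft (φ : Module.Dual k H) :
    LinearMap.mulRight k (dualMulLeft k H φ) ∘ₗ twistedLeft hS = twistedMulLeft hS φ ∘ₗ
      LinearMap.lTensor H ((TensorProduct.assoc k H (H ⊗[k] H) H).symm.toLinearMap ∘ₗ
        LinearMap.lTensor H (TensorProduct.assoc k H H H).symm.toLinearMap) ∘ₗ
      (TensorProduct.assoc k H H (H ⊗[k] (H ⊗[k] H))).toLinearMap ∘ₗ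
      TensorProduct.map (Coalgebra.comul (R := k))
        (LinearMap.lTensor H (Coalgebra.comul (R := k))) := by
  refine TensorProduct.ext_threefold' fun a b c ↦ TensorProduct.ext' fun φ' h ↦ ?_
  obtain ⟨m, A, A', ea⟩ := Coalgebra.exists_comul_eq_sum_fin (k := k) a
  obtain ⟨n, C, C', ec⟩ := Coalgebra.exists_comul_eq_sum_fin (k := k) c
  simp [ea, ec, TensorProduct.sum_tmul, TensorProduct.tmul_sum, dualInvAction_dualConv hS ec,
    dualSqAction_dualConv ea]

/-- The multiplication on `Hom_k(H, k) ⊗ H`. -/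
noncomputable def dualTensorMul : Module.Dual k H ⊗[k] H →ₗ[k]
    Module.End k (Module.Dual k H ⊗[k] H) :=
  TensorProduct.lift ((LinearMap.mul k _).compl₁₂ (dualMulLeft k H) (coactLeft hS))

@[simp]
theorem dualTensorMul_tmul (φ : Module.Dual k H) (h : H) :
    dualTensorMul hS (φ ⊗ₜ h) = dualMulLeft k H φ * coactLeft hS h := rfl

theorem dualTensorMul_dualMulLeft (φ : Module.Dual k H) (x : Module.Dual k H ⊗[k] H) :
    dualTensorMul hS (dualMulLeft k H φ x) = dualMulLeft k H φ * dualTensorMul hS x := by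
  induction x with
  | zero => simp
  | add x y hx hy => simp [hx, hy, mul_add]
  | tmul φ' h =>
    rw [dualMulLeft_tmul, dualTensorMul_tmul, dualTensorMul_tmul, ← mul_assoc]
    congr 1
    ext φ'' h' : 3
    simp [dualConv_assoc]

theorem coactLeft_mul_dualMulLeft (φ : Module.Dual k H) (h : H) :
    coactLeft hS h * dualMulLeft k H φ =
      twistedMulLeft hS φ (LinearMap.lTensor H (LinearMap.rTensor H (Delta2 k H))
        (Delta2 k H h)) := by
  refine congr($(twistedLeft_mul_dualMulLeft hS φ) (Delta2 k H h)).trans ?_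
  exact congr(twistedMulLeft hS φ ($lTensor_rTensor_Delta2_comp_Delta2 h)).symm

theorem dualTensorMul_twistedLeft_tmul (t : H ⊗[k] (H ⊗[k] H)) (φ : Module.Dual k H) (h : H) :
    dualTensorMul hS (twistedLeft hS t (φ ⊗ₜ h)) =
      twistedMulLeft hS φ (LinearMap.lTensor H (LinearMap.rTensor H (Delta2 k H)) t) *
        coactLeft hS h := by
  have : dualTensorMul hS ∘ₗ (twistedLeft hS).flip (φ ⊗ₜ h) =
      LinearMap.mulRight k (coactLeft hS h) ∘ₗ twistedMulLeft hS φ ∘ₗ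
        LinearMap.lTensor H (LinearMap.rTensor H (Delta2 k H)) := by
    refine TensorProduct.ext_threefold' fun a b c ↦ ?_
    simp [coactLeft_mul, mul_assoc]
    simp [coactLeft]
  exact congr($this t)

theorem dualTensorMul_coactLeft (h : H) (x : Module.Dual k H ⊗[k] H) :
    dualTensorMul hS (coactLeft hS h x) = coactLeft hS h * dualTensorMul hS x := by
  induction x with
  | zero => simp
  | add x y hx hy => simp [hx, hy, mul_add]
  | tmul φ h' =>
    rw [dualTensorMul_tmul, ← mul_assoc, coactLeft_mul_dualMulLeft]
    exact dualTensorMul_twistedLeft_tmul hS _ φ h'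

theorem dualTensorMul_assoc (x y : Module.Dual k H ⊗[k] H) :
    dualTensorMul hS (dualTensorMul hS x y) = dualTensorMul hS x * dualTensorMul hS y := by
  induction x with
  | zero => simp
  | add x x' hx hx' => simp [hx, hx', add_mul]
  | tmul φ h =>
    rw [dualTensorMul_tmul, Module.End.mul_apply, dualTensorMul_dualMulLeft,
      dualTensorMul_coactLeft, mul_assoc]

end DualAction

/-- Let `H` be a Hopf algebra with bijective antipode `S`.  On
`B := Hom_k(H,k) ⊗ H` the multiplication determined (in Sweedler notation) by
`(φ ⊗ h)·(φ' ⊗ h') = ψ ⊗ h₍₂₎h'` with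
`ψ(x) = φ(x₍₁₎)·φ'(S⁻¹(h₍₃₎) x₍₂₎ S²(h₍₁₎))`
is associative with unit `ε ⊗ 1`.  The multiplication is encoded as a bilinear map
`mul` whose value on elementary tensors is characterized through arbitrary finite
(Sweedler) representations of `Δ²(h)` and of `Δ(x)`. -/
theorem statement5 (k : Type*) [Field k] (H : Type*) [Ring H] [HopfAlgebra k H]
    (hS : Function.Bijective (antS k H)) :
    ∃ mul : (Module.Dual k H ⊗[k] H) →ₗ[k] (Module.Dual k H ⊗[k] H) →ₗ[k]
        (Module.Dual k H ⊗[k] H),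
      (∀ (φ φ' : Module.Dual k H) (h h' : H) (n : ℕ) (A B C : Fin n → H),
        Delta2 k H h = ∑ i : Fin n, A i ⊗ₜ[k] (B i ⊗ₜ[k] C i) →
        ∀ ψ : Fin n → Module.Dual k H,
          (∀ (i : Fin n) (x : H) (m : ℕ) (P Q : Fin m → H),
            Coalgebra.comul (R := k) x = ∑ j : Fin m, P j ⊗ₜ[k] Q j →
            ψ i x = ∑ j : Fin m,
              φ (P j) * φ' (antSinv k H (C i) * Q j * antS k H (antS k H (A i)))) →
          mul (φ ⊗ₜ[k] h) (φ' ⊗ₜ[k] h') = ∑ i : Fin n, ψ i ⊗ₜ[k] (B i * h')) ∧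
      (∀ x y z : Module.Dual k H ⊗[k] H, mul (mul x y) z = mul x (mul y z)) ∧
      (∀ x : Module.Dual k H ⊗[k] H,
        mul ((Coalgebra.counit (R := k) : Module.Dual k H) ⊗ₜ[k] (1 : H)) x = x ∧
        mul x ((Coalgebra.counit (R := k) : Module.Dual k H) ⊗ₜ[k] (1 : H)) = x) := by
  refine ⟨dualTensorMul hS, ?_, fun x y z ↦ ?_, fun x ↦ ⟨?_, ?_⟩⟩
  · intro φ φ' h h' n A B C hΔ ψ hψ
    have hψ' (i : Fin n) :
        ψ i = dualConv k H φ (dualSqAction k H (A i) (dualInvAction hS (C i) φ')) := by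
      ext x
      obtain ⟨m, P, Q, e⟩ := Coalgebra.exists_comul_eq_sum_fin (k := k) x
      rw [hψ i x m P Q e, dualConv_apply_of_comul_eq _ _ e]
      simp [antSinv_eq hS, mul_assoc]
    simp [coactLeft, hΔ, hψ']
  · rw [dualTensorMul_assoc, Module.End.mul_apply]
  · rw [dualTensorMul_tmul, coactLeft_one, mul_one]
    induction x with
    | zero => simp
    | add x y hx hy => simp [hx, hy]
    | tmul φ h => simp [counit_dualConv]
  · induction x with
    | zero => simp
    | add x y hx hy => simp [hx, hy]
    | tmul φ h => simp [coactLeft_counit_tmul_one, dualConv_counit]
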